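/- arXiv:2506.24058 — 2 statements merged into one kernel-verified Lean document; each statement's English description precedes it below -/
import Mathlib

section
/- Let n ≥ 1. Assume g : [0,∞) → ℝ is C² with g(t) > 0 and g'(t) > 0 for all t, ∫₀^∞ 1/g(τ) dτ < ∞, and, with G(t) = ½∫₀ᵗ g(τ) dτ, there are constants C₁, C₂ > 0 with |g'(t)| ≤ C₁ g(t)²/G(t) and |g''(t)| ≤ C₂ g(t)³/G(t)² for all t > 0. Assume b : [0,∞) → ℝ is C¹ with b(t) > 0, b'(t) < 0, ∫₀^∞ b(τ) dτ < ∞, b(t) ≤ C̃ g(t)/G(t) for all t > 0 (some C̃ > 0), and |b'(t)| ≤ c·b(t)/(1+t) for all t (some c > 0). Then for every real σ ≥ 2 there is a constant C > 0 such that every Fourier solution û with data û₀, û₁ satisfies, for all t ≥ 0 (whenever the data integrals are finite): (∫_{ℝⁿ} |ξ|^{2σ} |û(t,ξ)|² dξ)^{1/2} ≤ C [ (∫ |ξ|^{2σ} |û₀(ξ)|² dξ)^{1/2} + (∫ |ξ|^{2(σ−2)} |û₁(ξ)|² dξ)^{1/2} ] and (∫ |ξ|^{2(σ−2)} |∂ₜû(t,ξ)|²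 dξ)^{1/2} ≤ C g(t) [ (∫ |ξ|^{2σ} |û₀(ξ)|² dξ)^{1/2} + (∫ |ξ|^{2(σ−2)} |û₁(ξ)|² dξ)^{1/2} ]. -/
open MeasureTheory Filter

/-!
At frequency `ξ` put `E(t) = |ξ|²|û| + |ûₜ| / g`. The viscoelastic term makes `|ûₜ|` decrease at
rate at least `g|ξ|²|ûₜ|`, which after division by `g` exactly absorbs the growth `|ξ|²|ûₜ|` of the
first summand, while `b ≥ 0` and the monotonicity of `g` only help. What is left is
`E' ≤ |ξ|²|û| / g ≤ E / g`, so by Grönwall `E(t) ≤ exp(∫₀^∞ 1/g) E(0)` uniformly in `ξ`.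
Multiplying by `|ξ|^(σ-2)` and taking `L²` norms gives both estimates. As norms are not
differentiable at zero, `E'` is understood as an upper right Dini derivative.
-/

open scoped Topology

section RightMajorant

open Set

variable {f f₁ f₂ : ℝ → ℝ} {d d₁ d₂ t : ℝ}

/-- The upper right Dini derivative of `f` at `t` is at most `d`, encoded by a majorant of `f` to
the right of `t` which touches `f` at `t` and has right derivative `d` there. -/
def HasRightMajorantAt (f : ℝ → ℝ) (d t : ℝ) : Prop :=
  ∃ M : ℝ → ℝ, M t = f t ∧ f ≤ᶠ[𝓝[>] t] M ∧ HasDerivWithinAt M d (Ioi t) t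

namespace HasRightMajorantAt

theorem of_eventuallyLE (h : HasRightMajorantAt f₂ d t) (hle : f₁ ≤ᶠ[𝓝[>] t] f₂)
    (heq : f₁ t = f₂ t) : HasRightMajorantAt f₁ d t :=
  let ⟨M, hMt, hM, hM'⟩ := h
  ⟨M, hMt.trans heq.symm, hle.trans hM, hM'⟩

theorem add (h₁ : HasRightMajorantAt f₁ d₁ t) (h₂ : HasRightMajorantAt f₂ d₂ t) :
    HasRightMajorantAt (fun s => f₁ s + f₂ s) (d₁ + d₂) t := by
  obtain ⟨M₁, hM₁t, hM₁, hM₁'⟩ := h₁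
  obtain ⟨M₂, hM₂t, hM₂, hM₂'⟩ := h₂
  exact ⟨fun s => M₁ s + M₂ s, by simp only [hM₁t, hM₂t], hM₁.add_le_add hM₂, hM₁'.add hM₂'⟩

theorem mul_of_nonneg {p : ℝ → ℝ} {p' : ℝ} (h : HasRightMajorantAt f d t) (hp : ∀ s, 0 ≤ p s)
    (hp' : HasDerivWithinAt p p' (Ioi t) t) :
    HasRightMajorantAt (fun s => f s * p s) (d * p t + f t * p') t := by
  obtain ⟨M, hMt, hM, hM'⟩ := h
  refine ⟨fun s => M s * p s, by simp only [hMt], ?_, hMt ▸ hM'.mul hp'⟩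
  filter_upwards [hM] with s hs using mul_le_mul_of_nonneg_right hs (hp s)

theorem const_mul {c : ℝ} (h : HasRightMajorantAt f d t) (hc : 0 ≤ c) :
    HasRightMajorantAt (fun s => c * f s) (c * d) t := by
  simpa [mul_comm] using h.mul_of_nonneg (fun _ => hc) (hasDerivWithinAt_const t (Ioi t) c)

theorem eventually_slope_lt {m : ℝ} (h : HasRightMajorantAt f d t) (hm : d < m) :
    ∀ᶠ s in 𝓝[>] t, slope f t s < m := by
  obtain ⟨M, hMt, hM, hM'⟩ := h
  have hslope : Tendsto (slope M t) (𝓝[>] t) (𝓝 d) :=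
    (hasDerivWithinAt_iff_tendsto_slope' self_notMem_Ioi).1 hM'
  filter_upwards [hM, hslope.eventually_lt_const hm, self_mem_nhdsWithin] with s hs hlt hts
  refine lt_of_le_of_lt ?_ hlt
  have : 0 < s - t := sub_pos.2 hts
  rw [slope_def_field, slope_def_field, hMt]
  gcongr

end HasRightMajorantAt

/-- A linear term `a • w t` in the derivative contributes `a * ‖w t‖` with its sign, because
`‖(1 + (s - t) * a) • w t‖ = (1 + (s - t) * a) * ‖w t‖` for `s` close to `t`. -/
theorem hasRightMajorantAt_norm {F : Type*} [NormedAddCommGroup F] [NormedSpace ℝ F]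
    {w : ℝ → F} {x : F} {a t : ℝ} (hw : HasDerivWithinAt w (a • w t + x) (Ioi t) t) :
    HasRightMajorantAt (fun s => ‖w s‖) (a * ‖w t‖ + ‖x‖) t := by
  set R : ℝ → F := fun s => w s - w t - (s - t) • (a • w t + x)
  have hR : HasDerivWithinAt (fun s => ‖R s‖) 0 (Ioi t) t := by
    rw [hasDerivWithinAt_iff_isLittleO] at hw ⊢
    simpa [R] using hw.norm_left
  have hlin (c : ℝ) : HasDerivWithinAt (fun s => (s - t) * c) c (Ioi t) t := by
    simpa using ((hasDerivWithinAt_id t (Ioi t)).sub_const t).mul_const c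
  refine ⟨fun s => (1 + (s - t) * a) * ‖w t‖ + (s - t) * ‖x‖ + ‖R s‖, by simp [R], ?_, ?_⟩
  · have hpos : ∀ᶠ s in 𝓝[>] t, 0 < 1 + (s - t) * a :=
      (ContinuousAt.eventually_lt (by fun_prop) (by fun_prop) (by simp)).filter_mono
        nhdsWithin_le_nhds
    filter_upwards [hpos, self_mem_nhdsWithin] with s hs hts
    have hts : 0 ≤ s - t := (sub_pos.2 hts).le
    calc ‖w s‖ = ‖(1 + (s - t) * a) • w t + (s - t) • x + R s‖ := by
          congr 1; simp only [R]; module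
      _ ≤ ‖(1 + (s - t) * a) • w t‖ + ‖(s - t) • x‖ + ‖R s‖ := norm_add₃_le
      _ = (1 + (s - t) * a) * ‖w t‖ + (s - t) * ‖x‖ + ‖R s‖ := by
          rw [norm_smul_of_nonneg hs.le, norm_smul_of_nonneg hts]
  · simpa using ((((hlin a).const_add 1).mul_const ‖w t‖).fun_add (hlin ‖x‖)).fun_add hR

theorem le_of_hasRightMajorantAt_nonpos {a b : ℝ} (hab : a ≤ b) (hf : ContinuousOn f (Icc a b))
    (h : ∀ t ∈ Ico a b, ∃ d ≤ 0, HasRightMajorantAt f d t) : f b ≤ f a := by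
  refine image_le_of_liminf_slope_right_le_deriv_boundary (B := fun _ => f a) (B' := fun _ => 0)
    hf le_rfl continuousOn_const (fun t _ => hasDerivWithinAt_const t (Ici t) (f a))
    (fun t ht m hm => ?_) (right_mem_Icc.2 hab)
  obtain ⟨d, hd, hfd⟩ := h t ht
  exact (hfd.eventually_slope_lt (hd.trans_lt hm)).frequently

theorem le_mul_exp_integral_of_hasRightMajorantAt {k : ℝ → ℝ} {a b : ℝ} (hab : a ≤ b)
    (hf : ContinuousOn f (Icc a b)) (hk : ContinuousOn k (Icc a b))
    (h : ∀ t ∈ Ico a b, ∃ d ≤ k t * f t, HasRightMajorantAt f d t) :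
    f b ≤ f a * Real.exp (∫ s in a..b, k s) := by
  set Γ : ℝ → ℝ := fun t => ∫ s in a..t, k s
  have hk_int : IntegrableOn k (uIcc a b) := by
    rw [uIcc_of_le hab]; exact hk.integrableOn_Icc
  have hΓ_cont : ContinuousOn Γ (Icc a b) := by
    simpa only [uIcc_of_le hab] using
      intervalIntegral.continuousOn_primitive_interval hk_int
  have hΓ (t : ℝ) (ht : t ∈ Ico a b) : HasDerivWithinAt Γ (k t) (Ioi t) t := by
    have hmem : Icc a b ∈ 𝓝[>] t :=
      mem_of_superset (Ioo_mem_nhdsGT ht.2) fun s hs => ⟨ht.1.trans hs.1.le, hs.2.le⟩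
    have hint : IntervalIntegrable k volume a t :=
      (hk.mono (Icc_subset_Icc_right ht.2.le)).intervalIntegrable_of_Icc ht.1
    exact (intervalIntegral.integral_hasDerivWithinAt_right (s := Ici t) (t := Ioi t) hint
      ⟨Icc a b, hmem, hk.aestronglyMeasurable measurableSet_Icc⟩
      ((hk t (Ico_subset_Icc_self ht)).mono_of_mem_nhdsWithin hmem)).mono Ioi_subset_Ici_self
  have hdecr : f b * Real.exp (-Γ b) ≤ f a * Real.exp (-Γ a) := by
    refine le_of_hasRightMajorantAt_nonpos (f := fun t => f t * Real.exp (-Γ t)) hab (by fun_prop)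
      fun t ht => ?_
    obtain ⟨d, hd, hfd⟩ := h t ht
    refine ⟨_, ?_, hfd.mul_of_nonneg (fun s => (Real.exp_pos (-Γ s)).le) (hΓ t ht).fun_neg.exp⟩
    nlinarith [mul_le_mul_of_nonneg_right hd (Real.exp_pos (-Γ t)).le]
  simpa [Γ, Real.exp_neg, ← div_eq_mul_inv, div_le_iff₀ (Real.exp_pos _)] using hdecr

end RightMajorant

section DampedOscillation

open Set

variable {F : Type*} [NormedAddCommGroup F] [NormedSpace ℝ F]
  {lam : ℝ} {a g : ℝ → ℝ} {v w : ℝ → F}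

/-- `v`, with velocity `w`, solves `v'' + a v' + lam v = 0` on `[0, ∞)`, written as a first-order
system with derivatives one-sided at `0`. -/
structure IsDampedOscillation (lam : ℝ) (a : ℝ → ℝ) (v w : ℝ → F) : Prop where
  hasDerivWithinAt_position : ∀ t, 0 ≤ t → HasDerivWithinAt v (w t) (Ici 0) t
  hasDerivWithinAt_velocity : ∀ t, 0 ≤ t →
    HasDerivWithinAt w (-a t • w t + -lam • v t) (Ici 0) t

/-- The first-order energy `lam |v| + |v'| / g`, which grows at most at rate `1 / g` when
the damping is at least `lam g`. -/
noncomputable def scaledEnergy (lam : ℝ) (g : ℝ → ℝ) (v w : ℝ → F) (t : ℝ) : ℝ :=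
  lam * ‖v t‖ + (g t)⁻¹ * ‖w t‖

theorem isDampedOscillation_of_deriv_deriv {v : ℝ → ℂ} (hv : ContDiff ℝ 2 v)
    (hode : ∀ t, 0 ≤ t → deriv (deriv v) t + (lam : ℂ) * v t + (a t : ℂ) * deriv v t = 0) :
    IsDampedOscillation lam a v (deriv v) where
  hasDerivWithinAt_position t _ :=
    (hv.differentiable two_ne_zero t).hasDerivAt.hasDerivWithinAt
  hasDerivWithinAt_velocity t ht := by
    have hacc : deriv (deriv v) t = -a t • deriv v t + -lam • v t := by
      simp only [Complex.real_smul]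
      push_cast
      linear_combination hode t ht
    exact hacc ▸ ((hv.deriv' (n := 1)).differentiable one_ne_zero t).hasDerivAt.hasDerivWithinAt

namespace IsDampedOscillation

theorem exists_hasRightMajorantAt_scaledEnergy (h : IsDampedOscillation lam a v w)
    (hlam : 0 ≤ lam) (hg_pos : ∀ t, 0 ≤ t → 0 < g t) (hg_mono : MonotoneOn g (Ici 0))
    (ha : ∀ t, 0 ≤ t → g t * lam ≤ a t) {t : ℝ} (ht : 0 ≤ t) :
    ∃ d ≤ (g t)⁻¹ * scaledEnergy lam g v w t,
      HasRightMajorantAt (scaledEnergy lam g v w) d t := by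
  have hgt := hg_pos t ht
  have hsub : Ioi t ⊆ Ici 0 := Ioi_subset_Ici ht
  have hv : HasRightMajorantAt (fun s => ‖v s‖) ‖w t‖ t := by
    simpa using hasRightMajorantAt_norm (a := 0) (x := w t)
      (by simpa using (h.hasDerivWithinAt_position t ht).mono hsub)
  have hw : HasRightMajorantAt (fun s => ‖w s‖) (-a t * ‖w t‖ + lam * ‖v t‖) t := by
    simpa [norm_smul, abs_of_nonneg hlam] using
      hasRightMajorantAt_norm ((h.hasDerivWithinAt_velocity t ht).mono hsub)
  refine ⟨_, ?_, ((hv.const_mul hlam).add (hw.const_mul (inv_pos.2 hgt).le)).of_eventuallyLE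
    ?_ rfl⟩
  · have hdamp : lam * ‖w t‖ ≤ (g t)⁻¹ * (a t * ‖w t‖) := by
      rw [le_inv_mul_iff₀ hgt, ← mul_assoc]
      exact mul_le_mul_of_nonneg_right (ha t ht) (norm_nonneg _)
    have hnonneg : 0 ≤ (g t)⁻¹ * ((g t)⁻¹ * ‖w t‖) := by positivity
    unfold scaledEnergy
    linarith
  · filter_upwards [self_mem_nhdsWithin] with s hs
    have hgs : g t ≤ g s := hg_mono ht (hsub hs) (le_of_lt hs)
    unfold scaledEnergy
    gcongr

theorem continuousOn_scaledEnergy (h : IsDampedOscillation lam a v w)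
    (hg_cont : ContinuousOn g (Ici 0)) (hg_pos : ∀ t, 0 ≤ t → 0 < g t) :
    ContinuousOn (scaledEnergy lam g v w) (Ici 0) := by
  have hv : ContinuousOn v (Ici 0) := fun t ht =>
    (h.hasDerivWithinAt_position t ht).continuousWithinAt
  have hw : ContinuousOn w (Ici 0) := fun t ht =>
    (h.hasDerivWithinAt_velocity t ht).continuousWithinAt
  exact (hv.norm.const_mul lam).add ((hg_cont.inv₀ fun t ht => (hg_pos t ht).ne').mul hw.norm)

theorem scaledEnergy_le (h : IsDampedOscillation lam a v w) (hlam : 0 ≤ lam)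
    (hg_cont : ContinuousOn g (Ici 0)) (hg_pos : ∀ t, 0 ≤ t → 0 < g t)
    (hg_mono : MonotoneOn g (Ici 0)) (hg_int : IntegrableOn (fun t => (g t)⁻¹) (Ici 0))
    (ha : ∀ t, 0 ≤ t → g t * lam ≤ a t) {t : ℝ} (ht : 0 ≤ t) :
    scaledEnergy lam g v w t ≤
      scaledEnergy lam g v w 0 * Real.exp (∫ s in Ici (0 : ℝ), (g s)⁻¹) := by
  have hsub : Icc 0 t ⊆ Ici 0 := Icc_subset_Ici_self
  have henergy : 0 ≤ scaledEnergy lam g v w 0 := by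
    have := hg_pos 0 le_rfl
    unfold scaledEnergy
    positivity
  have hintegral : ∫ s in (0 : ℝ)..t, (g s)⁻¹ ≤ ∫ s in Ici (0 : ℝ), (g s)⁻¹ := by
    rw [intervalIntegral.integral_of_le ht]
    refine setIntegral_mono_set hg_int ?_ (Ioc_subset_Icc_self.trans hsub).eventuallyLE
    exact ae_restrict_of_forall_mem measurableSet_Ici fun s hs => (inv_pos.2 (hg_pos s hs)).le
  calc scaledEnergy lam g v w t
      ≤ scaledEnergy lam g v w 0 * Real.exp (∫ s in (0 : ℝ)..t, (g s)⁻¹) :=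
        le_mul_exp_integral_of_hasRightMajorantAt ht
          ((h.continuousOn_scaledEnergy hg_cont hg_pos).mono hsub)
          ((hg_cont.inv₀ fun s hs => (hg_pos s hs).ne').mono hsub)
          fun s hs => h.exists_hasRightMajorantAt_scaledEnergy hlam hg_pos hg_mono ha hs.1
    _ ≤ _ := by gcongr

end IsDampedOscillation

theorem exists_scaledEnergy_le (hg_cont : ContinuousOn g (Ici 0)) (hg_pos : ∀ t, 0 ≤ t → 0 < g t)
    (hg_mono : MonotoneOn g (Ici 0)) (hg_int : IntegrableOn (fun t => (g t)⁻¹) (Ici 0)) :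
    ∃ K > 0, ∀ (lam : ℝ) (a : ℝ → ℝ) (v w : ℝ → F), 0 ≤ lam → (∀ t, 0 ≤ t → g t * lam ≤ a t) →
      IsDampedOscillation lam a v w →
      ∀ t, 0 ≤ t → scaledEnergy lam g v w t ≤ K * (lam * ‖v 0‖ + ‖w 0‖) := by
  refine ⟨max 1 (g 0)⁻¹ * Real.exp (∫ s in Ici (0 : ℝ), (g s)⁻¹), by positivity,
    fun lam a v w hlam ha h t ht => ?_⟩
  have hinit : scaledEnergy lam g v w 0 ≤ max 1 (g 0)⁻¹ * (lam * ‖v 0‖ + ‖w 0‖) := by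
    rw [mul_add, scaledEnergy]
    exact add_le_add (le_mul_of_one_le_left (by positivity) (le_max_left ..))
      (mul_le_mul_of_nonneg_right (le_max_right ..) (norm_nonneg _))
  calc scaledEnergy lam g v w t
      ≤ scaledEnergy lam g v w 0 * Real.exp (∫ s in Ici (0 : ℝ), (g s)⁻¹) :=
        h.scaledEnergy_le hlam hg_cont hg_pos hg_mono hg_int ha ht
    _ ≤ max 1 (g 0)⁻¹ * (lam * ‖v 0‖ + ‖w 0‖) * Real.exp (∫ s in Ici (0 : ℝ), (g s)⁻¹) := by
        gcongr
    _ = _ := by ring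

end DampedOscillation

section FourierSobolev

variable {E F F₀ F₁ : Type*} [NormedAddCommGroup E] [MeasurableSpace E]
  [NormedAddCommGroup F] [NormedAddCommGroup F₀] [NormedAddCommGroup F₁]
  {μ : Measure E} {s s₀ s₁ K : ℝ} {f : E → F} {f₀ : E → F₀} {f₁ : E → F₁}

/-- The homogeneous Sobolev norm of order `s` of the function with Fourier transform `f`. It is
meaningful only under `FourierSobolevMem`; otherwise the integral has the junk value `0`. -/
noncomputable def fourierSobolevNorm (μ : Measure E) (s : ℝ) (f : E → F) : ℝ :=
  √(∫ ξ, ‖ξ‖ ^ (2 * s) * ‖f ξ‖ ^ 2 ∂μ)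

/-- Finiteness of the homogeneous Sobolev norm of order `s` of the function with Fourier
transform `f`. -/
def FourierSobolevMem (μ : Measure E) (s : ℝ) (f : E → F) : Prop :=
  Integrable (fun ξ => ‖ξ‖ ^ (2 * s) * ‖f ξ‖ ^ 2) μ

theorem rpow_two_mul_mul_sq_le {x y y₀ y₁ : ℝ} (hx : 0 ≤ x) (hy : 0 ≤ y)
    (h : x ^ s * y ≤ K * (x ^ s₀ * y₀ + x ^ s₁ * y₁)) :
    x ^ (2 * s) * y ^ 2 ≤ 2 * K ^ 2 * (x ^ (2 * s₀) * y₀ ^ 2 + x ^ (2 * s₁) * y₁ ^ 2) := by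
  have hsq (p : ℝ) : x ^ (2 * p) = (x ^ p) ^ 2 := by
    rw [mul_comm, ← Nat.cast_ofNat, Real.rpow_mul_natCast hx]
  simp only [hsq, ← mul_pow]
  calc (x ^ s * y) ^ 2 ≤ (K * (x ^ s₀ * y₀ + x ^ s₁ * y₁)) ^ 2 := by gcongr
    _ = K ^ 2 * (x ^ s₀ * y₀ + x ^ s₁ * y₁) ^ 2 := mul_pow ..
    _ ≤ K ^ 2 * (2 * ((x ^ s₀ * y₀) ^ 2 + (x ^ s₁ * y₁) ^ 2)) := by gcongr; exact add_sq_le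
    _ = _ := by ring

theorem FourierSobolevMem.of_norm_le [OpensMeasurableSpace E] (h₀ : FourierSobolevMem μ s₀ f₀)
    (h₁ : FourierSobolevMem μ s₁ f₁) (hf : AEStronglyMeasurable f μ)
    (h : ∀ᵐ ξ ∂μ, ‖ξ‖ ^ s * ‖f ξ‖ ≤ K * (‖ξ‖ ^ s₀ * ‖f₀ ξ‖ + ‖ξ‖ ^ s₁ * ‖f₁ ξ‖)) :
    FourierSobolevMem μ s f := by
  refine ((h₀.add h₁).const_mul (2 * K ^ 2)).mono' ?_ ?_
  · exact (measurable_norm.pow_const _).aestronglyMeasurable.mul (hf.norm.pow 2)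
  · filter_upwards [h] with ξ hξ
    rw [Real.norm_of_nonneg (by positivity)]
    exact rpow_two_mul_mul_sq_le (norm_nonneg ξ) (norm_nonneg _) hξ

theorem fourierSobolevNorm_le_of_norm_le (hK : 0 ≤ K) (h₀ : FourierSobolevMem μ s₀ f₀)
    (h₁ : FourierSobolevMem μ s₁ f₁)
    (h : ∀ᵐ ξ ∂μ, ‖ξ‖ ^ s * ‖f ξ‖ ≤ K * (‖ξ‖ ^ s₀ * ‖f₀ ξ‖ + ‖ξ‖ ^ s₁ * ‖f₁ ξ‖)) :
    fourierSobolevNorm μ s f ≤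
      √2 * K * (fourierSobolevNorm μ s₀ f₀ + fourierSobolevNorm μ s₁ f₁) := by
  set I₀ := ∫ ξ, ‖ξ‖ ^ (2 * s₀) * ‖f₀ ξ‖ ^ 2 ∂μ
  set I₁ := ∫ ξ, ‖ξ‖ ^ (2 * s₁) * ‖f₁ ξ‖ ^ 2 ∂μ
  have hint : ∫ ξ, ‖ξ‖ ^ (2 * s) * ‖f ξ‖ ^ 2 ∂μ ≤ 2 * K ^ 2 * (I₀ + I₁) := by
    rw [← integral_add h₀ h₁, ← integral_const_mul]
    refine integral_mono_of_nonneg (.of_forall fun ξ => by positivity)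
      ((h₀.add h₁).const_mul _) ?_
    filter_upwards [h] with ξ hξ
    exact rpow_two_mul_mul_sq_le (norm_nonneg ξ) (norm_nonneg _) hξ
  have hsqrt : √(I₀ + I₁) ≤ √I₀ + √I₁ := by
    simp only [Real.sqrt_eq_rpow]
    exact Real.rpow_add_le_add_rpow (integral_nonneg fun ξ => by positivity)
      (integral_nonneg fun ξ => by positivity) (by positivity) (by norm_num)
  calc fourierSobolevNorm μ s f ≤ √(2 * K ^ 2 * (I₀ + I₁)) := Real.sqrt_le_sqrt hint
    _ = √2 * K * √(I₀ + I₁) := by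
        rw [Real.sqrt_mul (by positivity), Real.sqrt_mul zero_le_two, Real.sqrt_sq hK]
    _ ≤ √2 * K * (√I₀ + √I₁) := by gcongr

end FourierSobolev

section Decay

open Set

theorem aestronglyMeasurable_of_hasDerivWithinAt_Ioi {α F : Type*} [MeasurableSpace α]
    {μ : Measure α} [NormedAddCommGroup F] [NormedSpace ℝ F] {u : ℝ → α → F} {u' : α → F} {t : ℝ}
    (hu : ∀ s, t ≤ s → AEStronglyMeasurable (u s) μ)
    (hu' : ∀ x, HasDerivWithinAt (fun s => u s x) (u' x) (Ioi t) t) :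
    AEStronglyMeasurable u' μ := by
  obtain ⟨τ, -, hτt, hτ⟩ := exists_seq_strictAnti_tendsto_nhdsWithin t
  refine aestronglyMeasurable_of_tendsto_ae atTop
    (f := fun k x => slope (fun s => u s x) t (τ k)) (fun k => ?_) (.of_forall fun x => ?_)
  · simp only [slope_def_module]
    exact ((hu _ (hτt k).le).sub (hu t le_rfl)).const_smul _
  · exact ((hasDerivWithinAt_iff_tendsto_slope' self_notMem_Ioi).1 (hu' x)).comp hτ

theorem rpow_mul_le_of_sq_mul_add_le {x y z y₀ z₀ c K : ℝ} (hx : 0 < x) (hy : 0 ≤ y) (hz : 0 ≤ z)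
    (hc : 0 < c) (h : x ^ 2 * y + c⁻¹ * z ≤ K * (x ^ 2 * y₀ + z₀)) (σ : ℝ) :
    x ^ σ * y ≤ K * (x ^ σ * y₀ + x ^ (σ - 2) * z₀) ∧
      x ^ (σ - 2) * z ≤ K * c * (x ^ σ * y₀ + x ^ (σ - 2) * z₀) := by
  have hpow : x ^ σ = x ^ (σ - 2) * x ^ 2 := by
    rw [← Real.rpow_natCast x 2, ← Real.rpow_add hx]
    simp
  have hy' : x ^ 2 * y ≤ K * (x ^ 2 * y₀ + z₀) := le_of_add_le_of_nonneg_left h (by positivity)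
  have hz' : z ≤ c * (K * (x ^ 2 * y₀ + z₀)) :=
    (inv_mul_le_iff₀ hc).1 (le_of_add_le_of_nonneg_right h (by positivity))
  have hweight : 0 ≤ x ^ (σ - 2) := by positivity
  rw [hpow]
  constructor
  · linarith [mul_le_mul_of_nonneg_left hy' hweight]
  · linarith [mul_le_mul_of_nonneg_left hz' hweight]

theorem scattering_increasing_viscoelastic_decay_general
    {E F : Type*} [NormedAddCommGroup E] [MeasurableSpace E] [OpensMeasurableSpace E]
    [NormedAddCommGroup F] [NormedSpace ℝ F] (μ : Measure E) (hμ : μ {0} = 0)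
    {b g : ℝ → ℝ} (hb : ∀ t, 0 ≤ t → 0 ≤ b t)
    (hg_cont : ContinuousOn g (Ici 0)) (hg_pos : ∀ t, 0 ≤ t → 0 < g t)
    (hg_mono : MonotoneOn g (Ici 0)) (hg_int : IntegrableOn (fun t => (g t)⁻¹) (Ici 0)) :
    ∃ C > 0, ∀ (σ : ℝ) (uh vh : ℝ → E → F),
      (∀ t, 0 ≤ t → AEStronglyMeasurable (uh t) μ) →
      (∀ ξ, IsDampedOscillation (‖ξ‖ ^ 2) (fun t => b t + g t * ‖ξ‖ ^ 2)
        (fun t => uh t ξ) (fun t => vh t ξ)) →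
      FourierSobolevMem μ σ (uh 0) → FourierSobolevMem μ (σ - 2) (vh 0) →
      ∀ t, 0 ≤ t →
        (FourierSobolevMem μ σ (uh t) ∧ FourierSobolevMem μ (σ - 2) (vh t)) ∧
        fourierSobolevNorm μ σ (uh t) ≤
          C * (fourierSobolevNorm μ σ (uh 0) + fourierSobolevNorm μ (σ - 2) (vh 0)) ∧
        fourierSobolevNorm μ (σ - 2) (vh t) ≤
          C * g t * (fourierSobolevNorm μ σ (uh 0) + fourierSobolevNorm μ (σ - 2) (vh 0)) := by
  obtain ⟨K, hK, henergy⟩ := exists_scaledEnergy_le (F := F) hg_cont hg_pos hg_mono hg_int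
  refine ⟨√2 * K, by positivity, fun σ uh vh hmeas hmode h₀ h₁ t ht => ?_⟩
  have hgt := hg_pos t ht
  have hpointwise : ∀ᵐ ξ ∂μ,
      ‖ξ‖ ^ σ * ‖uh t ξ‖ ≤ K * (‖ξ‖ ^ σ * ‖uh 0 ξ‖ + ‖ξ‖ ^ (σ - 2) * ‖vh 0 ξ‖) ∧
      ‖ξ‖ ^ (σ - 2) * ‖vh t ξ‖ ≤
        K * g t * (‖ξ‖ ^ σ * ‖uh 0 ξ‖ + ‖ξ‖ ^ (σ - 2) * ‖vh 0 ξ‖) := by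
    filter_upwards [measure_eq_zero_iff_ae_notMem.1 hμ] with ξ hξ
    exact rpow_mul_le_of_sq_mul_add_le (norm_pos_iff.2 hξ) (norm_nonneg _) (norm_nonneg _) hgt
      (henergy _ _ _ _ (sq_nonneg ‖ξ‖) (fun s hs => le_add_of_nonneg_left (hb s hs)) (hmode ξ) t ht)
      σ
  obtain ⟨hposition, hvelocity⟩ := eventually_and.1 hpointwise
  have hvh : AEStronglyMeasurable (vh t) μ :=
    aestronglyMeasurable_of_hasDerivWithinAt_Ioi (fun s hs => hmeas s (ht.trans hs))
      fun ξ => ((hmode ξ).hasDerivWithinAt_position t ht).mono (Ioi_subset_Ici ht)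
  refine ⟨⟨h₀.of_norm_le h₁ (hmeas t ht) hposition, h₀.of_norm_le h₁ hvh hvelocity⟩,
    fourierSobolevNorm_le_of_norm_le hK.le h₀ h₁ hposition, ?_⟩
  rw [mul_assoc (√2)]
  exact fourierSobolevNorm_le_of_norm_le (by positivity) h₀ h₁ hvelocity

end Decay

/-- Theorem 2.1 of the paper: scattering-producing friction `b(t)uₜ` together with an
increasing viscoelastic coefficient `g = g(t)`.  Higher-order energy estimates for
Fourier solutions of `∂ₜ²uh + |ξ|²uh + (b(t)+g(t)|ξ|²)∂ₜuh = 0`. -/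
theorem scattering_increasing_viscoelastic_decay
    (n : ℕ) (hn : 1 ≤ n)
    (b g G : ℝ → ℝ)
    (hg_smooth : ContDiff ℝ 2 g)
    (hg_pos : ∀ t : ℝ, 0 ≤ t → 0 < g t)
    (hg_deriv_pos : ∀ t : ℝ, 0 ≤ t → 0 < deriv g t)
    (hg_int : IntegrableOn (fun t => (g t)⁻¹) (Set.Ici (0 : ℝ)))
    (hG : ∀ t : ℝ, G t = (1 / 2) * ∫ τ in (0 : ℝ)..t, g τ)
    (C₁ C₂ : ℝ) (hC₁ : 0 < C₁) (hC₂ : 0 < C₂)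
    (hg1 : ∀ t : ℝ, 0 < t → |deriv g t| ≤ C₁ * (g t) ^ 2 / G t)
    (hg2 : ∀ t : ℝ, 0 < t → |deriv (deriv g) t| ≤ C₂ * (g t) ^ 3 / (G t) ^ 2)
    (hb_smooth : ContDiff ℝ 1 b)
    (hb_pos : ∀ t : ℝ, 0 ≤ t → 0 < b t)
    (hb_deriv_neg : ∀ t : ℝ, 0 ≤ t → deriv b t < 0)
    (hb_int : IntegrableOn b (Set.Ici (0 : ℝ)))
    (Ctil : ℝ) (hCtil : 0 < Ctil)
    (hbG : ∀ t : ℝ, 0 < t → b t ≤ Ctil * g t / G t)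
    (c : ℝ) (hc : 0 < c)
    (hb1 : ∀ t : ℝ, 0 ≤ t → |deriv b t| ≤ c * b t / (1 + t)) :
    ∀ σ : ℝ, 2 ≤ σ →
      ∃ C : ℝ, 0 < C ∧
        ∀ (uh : ℝ → EuclideanSpace ℝ (Fin n) → ℂ)
          (u₀ u₁ : EuclideanSpace ℝ (Fin n) → ℂ),
          Measurable (fun p : ℝ × EuclideanSpace ℝ (Fin n) => uh p.1 p.2) →
          (∀ ξ : EuclideanSpace ℝ (Fin n), ContDiff ℝ 2 (fun s => uh s ξ)) →
          (∀ (ξ : EuclideanSpace ℝ (Fin n)) (t : ℝ), 0 ≤ t →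
            deriv (deriv (fun s => uh s ξ)) t + ((‖ξ‖ ^ 2 : ℝ) : ℂ) * uh t ξ +
              ((b t + g t * ‖ξ‖ ^ 2 : ℝ) : ℂ) * deriv (fun s => uh s ξ) t = 0) →
          (∀ ξ : EuclideanSpace ℝ (Fin n), uh 0 ξ = u₀ ξ) →
          (∀ ξ : EuclideanSpace ℝ (Fin n), deriv (fun s => uh s ξ) 0 = u₁ ξ) →
          ∀ t : ℝ, 0 ≤ t →
            Integrable (fun ξ : EuclideanSpace ℝ (Fin n) =>
              ‖ξ‖ ^ (2 * σ) * ‖u₀ ξ‖ ^ 2) →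
            Integrable (fun ξ : EuclideanSpace ℝ (Fin n) =>
              ‖ξ‖ ^ (2 * (σ - 2)) * ‖u₁ ξ‖ ^ 2) →
            Real.sqrt (∫ ξ : EuclideanSpace ℝ (Fin n), ‖ξ‖ ^ (2 * σ) * ‖uh t ξ‖ ^ 2) ≤
                C * (Real.sqrt (∫ ξ : EuclideanSpace ℝ (Fin n), ‖ξ‖ ^ (2 * σ) * ‖u₀ ξ‖ ^ 2) +
                  Real.sqrt (∫ ξ : EuclideanSpace ℝ (Fin n),
                    ‖ξ‖ ^ (2 * (σ - 2)) * ‖u₁ ξ‖ ^ 2)) ∧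
              Real.sqrt (∫ ξ : EuclideanSpace ℝ (Fin n),
                  ‖ξ‖ ^ (2 * (σ - 2)) * ‖deriv (fun s => uh s ξ) t‖ ^ 2) ≤
                C * g t *
                  (Real.sqrt (∫ ξ : EuclideanSpace ℝ (Fin n), ‖ξ‖ ^ (2 * σ) * ‖u₀ ξ‖ ^ 2) +
                    Real.sqrt (∫ ξ : EuclideanSpace ℝ (Fin n),
                      ‖ξ‖ ^ (2 * (σ - 2)) * ‖u₁ ξ‖ ^ 2)) := by
  have : NeZero n := ⟨by lia⟩
  obtain ⟨C, hC, hdecay⟩ := scattering_increasing_viscoelastic_decay_general (F := ℂ)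
    (volume : Measure (EuclideanSpace ℝ (Fin n))) (measure_singleton 0)
    (fun t ht => (hb_pos t ht).le) hg_smooth.continuous.continuousOn hg_pos
    (monotoneOn_of_deriv_nonneg (convex_Ici 0) hg_smooth.continuous.continuousOn
      (hg_smooth.differentiable two_ne_zero).differentiableOn
      fun t ht => (hg_deriv_pos t (interior_subset ht)).le) hg_int
  refine fun σ _ => ⟨C, hC, fun uh u₀ u₁ hmeas hsmooth hode h₀ h₁ t ht hu₀ hu₁ => ?_⟩
  obtain rfl : uh 0 = u₀ := funext h₀
  obtain rfl : (fun ξ => deriv (fun s => uh s ξ) 0) = u₁ := funext h₁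
  exact (hdecay σ uh (fun t ξ => deriv (fun s => uh s ξ) t)
    (fun t _ => hmeas.of_uncurry_left.aestronglyMeasurable)
    (fun ξ => isDampedOscillation_of_deriv_deriv (hsmooth ξ) (hode ξ)) hu₀ hu₁ t ht).2
end

section
/- Let n ≥ 1. Assume g : [0,∞) → ℝ is C² with g(t) > 0 and g'(t) > 0 for all t, ∫₀^∞ 1/g(τ) dτ < ∞, and, with G(t) = ½∫₀ᵗ g(τ) dτ, there are constants C₁, C₂ > 0 with |g'(t)| ≤ C₁ g(t)²/G(t) and |g''(t)| ≤ C₂ g(t)³/G(t)² for all t > 0. Assume b : [0,∞) → ℝ is C¹ with b(t) > 0, b'(t) < 0, b(t)² ≤ C₀·(−b'(t)) for all t (some C₀ > 0), limsup_{t→∞} t·b(t) < 1, and b(t) ≤ C̃ g(t)/G(t) for all t > 0 (some C̃ > 0). Then for every real σ ≥ 2 there is a constant C > 0 such that every Fourier solution û with data û₀, û₁ satisfies, for all t ≥ 0 (whenever the data integrals are finite): (∫_{ℝⁿ} |ξ|^{2σ} |û(t,ξ)|² dξ)^{1/2} ≤ C [ (∫ |ξ|^{2σ} |û₀(ξ)|²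 dξ)^{1/2} + (∫ |ξ|^{2(σ−2)} |û₁(ξ)|² dξ)^{1/2} ] and (∫ |ξ|^{2(σ−2)} |∂ₜû(t,ξ)|² dξ)^{1/2} ≤ C g(t) [ (∫ |ξ|^{2σ} |û₀(ξ)|² dξ)^{1/2} + (∫ |ξ|^{2(σ−2)} |û₁(ξ)|² dξ)^{1/2} ]. -/
open MeasureTheory Filter

/-!
At frequency `ξ` the equation is a damped oscillator `u'' + κ u + a(t) u' = 0` with `κ = ‖ξ‖²`
and `a ≥ c κ`. The energy `κ ‖u‖² + ‖u'‖²` loses a power of `κ` on the initial velocity when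
`κ` is large. Replacing it by `κ ‖u‖² + θ(t) ‖u'‖²`, where `θ = 1 / (1 + κ exp (-c κ t))` solves
the logistic equation `θ' = c κ θ (1 - θ)`, gives weight about `1 / κ` to the initial velocity,
and the price is only a Grönwall factor with rate `(κ / c) exp (-c κ t)`, whose time integral is
at most `1 / c²` uniformly in `κ`. Hence `κ ‖u(t)‖` is bounded by the data. Since damping can only
decrease `‖u'‖`, this gives `‖u'(t)‖ ≤ ‖u'(0)‖ + t sup κ ‖u‖`, and `1 + t` is controlled by `g t`
because `1 / g` is decreasing and integrable.
-/

open scoped Topology RealInnerProductSpace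

section DifferentialInequalities

lemma le_of_hasDerivAt_nonpos {f f' : ℝ → ℝ} {s t : ℝ} (hst : s ≤ t)
    (hf : ∀ x ∈ Set.Icc s t, HasDerivAt f (f' x) x) (hf' : ∀ x ∈ Set.Icc s t, f' x ≤ 0) :
    f t ≤ f s := by
  have hanti : AntitoneOn f (Set.Icc s t) :=
    antitoneOn_of_hasDerivWithinAt_nonpos (convex_Icc s t)
      (fun x hx ↦ (hf x hx).continuousAt.continuousWithinAt)
      (fun x hx ↦ (hf x (interior_subset hx)).hasDerivWithinAt)
      (fun x hx ↦ hf' x (interior_subset hx))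
  exact hanti (Set.left_mem_Icc.2 hst) (Set.right_mem_Icc.2 hst) hst

lemma le_mul_exp_sub_of_hasDerivAt_le_mul {f f' φ φ' : ℝ → ℝ} {s t : ℝ} (hst : s ≤ t)
    (hf : ∀ x ∈ Set.Icc s t, HasDerivAt f (f' x) x)
    (hφ : ∀ x ∈ Set.Icc s t, HasDerivAt φ (φ' x) x)
    (hle : ∀ x ∈ Set.Icc s t, f' x ≤ φ' x * f x) :
    f t ≤ f s * Real.exp (φ t - φ s) := by
  have hdecr : f t * Real.exp (-φ t) ≤ f s * Real.exp (-φ s) := by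
    refine le_of_hasDerivAt_nonpos hst (fun x hx ↦ (hf x hx).mul (hφ x hx).fun_neg.exp) ?_
    intro x hx
    have := mul_le_mul_of_nonneg_right (hle x hx) (Real.exp_nonneg (-φ x))
    linarith
  calc f t = f t * Real.exp (-φ t) * Real.exp (φ t) := by
        rw [mul_assoc, ← Real.exp_add, neg_add_cancel, Real.exp_zero, mul_one]
    _ ≤ f s * Real.exp (-φ s) * Real.exp (φ t) := by gcongr
    _ = f s * Real.exp (φ t - φ s) := by
        rw [mul_assoc, ← Real.exp_add, neg_add_eq_sub]

variable {F : Type*} [NormedAddCommGroup F] [InnerProductSpace ℝ F]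

lemma two_mul_mul_inner_le_of_sq_le_mul {p α β : ℝ} (hα : 0 ≤ α) (hβ : 0 ≤ β)
    (hp : p ^ 2 ≤ α * β) (x y : F) :
    2 * (p * ⟪x, y⟫) ≤ α * ‖x‖ ^ 2 + β * ‖y‖ ^ 2 := by
  have hp' : |p| ≤ √α * √β := by
    rw [← Real.sqrt_mul hα]
    exact Real.abs_le_sqrt hp
  calc 2 * (p * ⟪x, y⟫) ≤ 2 * (|p| * |⟪x, y⟫|) := by
        rw [← abs_mul]
        gcongr
        exact le_abs_self _
    _ ≤ 2 * (√α * √β * (‖x‖ * ‖y‖)) := by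
        gcongr
        exact abs_real_inner_le_norm x y
    _ = 2 * (√α * ‖x‖) * (√β * ‖y‖) := by ring
    _ ≤ (√α * ‖x‖) ^ 2 + (√β * ‖y‖) ^ 2 := two_mul_le_add_sq _ _
    _ = α * ‖x‖ ^ 2 + β * ‖y‖ ^ 2 := by
        rw [mul_pow, mul_pow, Real.sq_sqrt hα, Real.sq_sqrt hβ]

lemma norm_le_add_mul_of_hasDerivAt_sub_smul {w f : ℝ → F} {a : ℝ → ℝ} {M t : ℝ} (ht : 0 ≤ t)
    (hw : ∀ s ∈ Set.Icc 0 t, HasDerivAt w (f s - a s • w s) s)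
    (ha : ∀ s ∈ Set.Icc 0 t, 0 ≤ a s) (hf : ∀ s ∈ Set.Icc 0 t, ‖f s‖ ≤ M) :
    ‖w t‖ ≤ ‖w 0‖ + M * t := by
  refine le_of_forall_pos_le_add fun ε hε ↦ ?_
  -- The regularisation `ε` makes the norm differentiable at zeros of `w`.
  have hregularised :
      √(ε ^ 2 + ‖w t‖ ^ 2) - M * t ≤ √(ε ^ 2 + ‖w 0‖ ^ 2) - M * 0 := by
    refine le_of_hasDerivAt_nonpos ht (fun s hs ↦ ((((hw s hs).norm_sq.const_add _).sqrt
      (by positivity)).sub ((hasDerivAt_id s).const_mul M))) fun s hs ↦ ?_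
    have hM : 0 ≤ M := (norm_nonneg _).trans (hf s hs)
    have hinner : ⟪w s, f s - a s • w s⟫ ≤ √(ε ^ 2 + ‖w s‖ ^ 2) * M :=
      calc ⟪w s, f s - a s • w s⟫ = ⟪w s, f s⟫ - a s * ‖w s‖ ^ 2 := by
            rw [inner_sub_right, real_inner_smul_right, real_inner_self_eq_norm_sq]
        _ ≤ ⟪w s, f s⟫ := sub_le_self _ (mul_nonneg (ha s hs) (sq_nonneg _))
        _ ≤ ‖w s‖ * ‖f s‖ := real_inner_le_norm _ _
        _ ≤ √(ε ^ 2 + ‖w s‖ ^ 2) * M := by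
            gcongr
            · exact Real.le_sqrt_of_sq_le (le_add_of_nonneg_left (sq_nonneg ε))
            · exact hf s hs
    rw [mul_one, sub_nonpos, mul_div_mul_left _ _ two_ne_zero, div_le_iff₀ (by positivity),
      mul_comm M]
    exact hinner
  have hlower : ‖w t‖ ≤ √(ε ^ 2 + ‖w t‖ ^ 2) :=
    Real.le_sqrt_of_sq_le (le_add_of_nonneg_left (sq_nonneg ε))
  have hupper : √(ε ^ 2 + ‖w 0‖ ^ 2) ≤ ε + ‖w 0‖ :=
    Real.sqrt_le_iff.2 ⟨by positivity, by nlinarith [mul_nonneg hε.le (norm_nonneg (w 0))]⟩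
  linarith

end DifferentialInequalities

section LogisticWeight

/-- The logistic weight `θ` of the velocity in the modified energy `κ ‖u‖² + θ ‖u'‖²`: it starts
at `1 / (1 + κ)` and increases to `1` on the time scale `1 / (c κ)` of the damping. -/
noncomputable def logisticWeight (c κ t : ℝ) : ℝ := (1 + κ * Real.exp (-(c * κ * t)))⁻¹

variable {c κ : ℝ} (t : ℝ)

lemma logisticWeight_zero : logisticWeight c κ 0 = (1 + κ)⁻¹ := by
  simp [logisticWeight]

lemma logisticWeight_pos (hκ : 0 ≤ κ) : 0 < logisticWeight c κ t := by
  unfold logisticWeight; positivity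

lemma one_sub_logisticWeight (hκ : 0 ≤ κ) :
    1 - logisticWeight c κ t = κ * Real.exp (-(c * κ * t)) * logisticWeight c κ t := by
  have : 1 + κ * Real.exp (-(c * κ * t)) ≠ 0 := by positivity
  unfold logisticWeight
  field_simp
  ring

lemma logisticWeight_le_one (hκ : 0 ≤ κ) : logisticWeight c κ t ≤ 1 := by
  have := logisticWeight_pos (c := c) t hκ
  rw [← sub_nonneg, one_sub_logisticWeight t hκ]
  positivity

lemma sq_one_sub_logisticWeight_le (hκ : 0 ≤ κ) :
    (1 - logisticWeight c κ t) ^ 2 ≤ κ * Real.exp (-(c * κ * t)) * logisticWeight c κ t := by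
  have hnonneg : 0 ≤ 1 - logisticWeight c κ t := sub_nonneg.2 (logisticWeight_le_one t hκ)
  have hle_one : 1 - logisticWeight c κ t ≤ 1 := sub_le_self _ (logisticWeight_pos t hκ).le
  rw [← one_sub_logisticWeight t hκ]
  exact pow_le_of_le_one hnonneg hle_one two_ne_zero

lemma hasDerivAt_logisticWeight (hκ : 0 ≤ κ) :
    HasDerivAt (logisticWeight c κ)
      (c * κ * logisticWeight c κ t * (1 - logisticWeight c κ t)) t := by
  have hne : 1 + κ * Real.exp (-(c * κ * t)) ≠ 0 := by positivity
  have hexp : HasDerivAt (fun s ↦ Real.exp (-(c * κ * s)))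
      (Real.exp (-(c * κ * t)) * -(c * κ * 1)) t :=
    ((hasDerivAt_id t).const_mul (c * κ)).fun_neg.exp
  refine (((hexp.const_mul κ).const_add 1).fun_inv hne).congr_deriv ?_
  rw [one_sub_logisticWeight t hκ, logisticWeight]
  field_simp

end LogisticWeight

section DampedOscillation

variable {F : Type*} [NormedAddCommGroup F] [InnerProductSpace ℝ F]

/-- `u` solves the damped oscillator equation `u'' + κ u + a(t) u' = 0` on `[0, ∞)`, with
velocity `v`, the derivative of `u`. -/
structure IsDampedOscillation_s2 (κ : ℝ) (a : ℝ → ℝ) (u v : ℝ → F) : Prop where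
  hasDerivAt_displacement : ∀ t, 0 ≤ t → HasDerivAt u (v t) t
  hasDerivAt_velocity : ∀ t, 0 ≤ t → HasDerivAt v (-(κ • u t) - a t • v t) t

/-- The modified energy `κ ‖u‖² + θ ‖v‖²` of an oscillation with displacement `u` and
velocity `v`, where `θ` is the logistic weight. -/
noncomputable def modifiedEnergy (c κ : ℝ) (u v : ℝ → F) (t : ℝ) : ℝ :=
  κ * ‖u t‖ ^ 2 + logisticWeight c κ t * ‖v t‖ ^ 2

lemma isDampedOscillation_of_contDiff {w : ℝ → ℂ} {a : ℝ → ℝ} {κ : ℝ} (hw : ContDiff ℝ 2 w)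
    (hode : ∀ t, 0 ≤ t → deriv (deriv w) t + (κ : ℂ) * w t + (a t : ℂ) * deriv w t = 0) :
    IsDampedOscillation_s2 κ a w (deriv w) where
  hasDerivAt_displacement t _ := (hw.differentiable two_ne_zero t).hasDerivAt
  hasDerivAt_velocity t ht := by
    have hsolve : deriv (deriv w) t = -(κ • w t) - a t • deriv w t := by
      simp only [Complex.real_smul]
      linear_combination hode t ht
    exact hsolve ▸ (hw.differentiable_deriv_two t).hasDerivAt

namespace IsDampedOscillation_s2

variable {κ c : ℝ} {a : ℝ → ℝ} {u v : ℝ → F}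

lemma hasDerivAt_modifiedEnergy (h : IsDampedOscillation_s2 κ a u v) (hκ : 0 ≤ κ) {t : ℝ}
    (ht : 0 ≤ t) :
    HasDerivAt (modifiedEnergy c κ u v)
      (2 * κ * (1 - logisticWeight c κ t) * ⟪u t, v t⟫ +
        (c * κ * (1 - logisticWeight c κ t) - 2 * a t) * logisticWeight c κ t * ‖v t‖ ^ 2) t := by
  refine (((h.hasDerivAt_displacement t ht).norm_sq.const_mul κ).add
    ((hasDerivAt_logisticWeight t hκ).mul (h.hasDerivAt_velocity t ht).norm_sq)).congr_deriv ?_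
  rw [inner_sub_right, inner_neg_right, real_inner_smul_right, real_inner_smul_right,
    real_inner_self_eq_norm_sq, real_inner_comm]
  ring

lemma deriv_modifiedEnergy_le (hc : 0 < c) (hκ : 0 ≤ κ) {t : ℝ} (ha : c * κ ≤ a t) :
    2 * κ * (1 - logisticWeight c κ t) * ⟪u t, v t⟫ +
        (c * κ * (1 - logisticWeight c κ t) - 2 * a t) * logisticWeight c κ t * ‖v t‖ ^ 2 ≤
      κ / c * Real.exp (-(c * κ * t)) * modifiedEnergy c κ u v t := by
  have hθ := logisticWeight_pos (c := c) t hκ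
  have hcross : 2 * ((1 - logisticWeight c κ t) * ⟪u t, v t⟫) ≤
      κ / c * Real.exp (-(c * κ * t)) * ‖u t‖ ^ 2 + c * logisticWeight c κ t * ‖v t‖ ^ 2 := by
    refine two_mul_mul_inner_le_of_sq_le_mul (by positivity) (by positivity) ?_ _ _
    refine (sq_one_sub_logisticWeight_le t hκ).trans_eq ?_
    field_simp
  unfold modifiedEnergy
  set θ := logisticWeight c κ t
  set rate := κ / c * Real.exp (-(c * κ * t))
  have hcross' := mul_le_mul_of_nonneg_left hcross hκ
  have hdamping : c * κ * (θ * ‖v t‖ ^ 2) ≤ a t * (θ * ‖v t‖ ^ 2) := by gcongr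
  have hdrop : 0 ≤ c * κ * θ * (θ * ‖v t‖ ^ 2) := by positivity
  have hrate : 0 ≤ rate * (θ * ‖v t‖ ^ 2) := by positivity
  linarith

lemma modifiedEnergy_le (h : IsDampedOscillation_s2 κ a u v) (hc : 0 < c) (hκ : 0 ≤ κ)
    (ha : ∀ t, 0 ≤ t → c * κ ≤ a t) {t : ℝ} (ht : 0 ≤ t) :
    modifiedEnergy c κ u v t ≤ Real.exp (1 / c ^ 2) * modifiedEnergy c κ u v 0 := by
  have hprimitive (s : ℝ) : HasDerivAt (fun s ↦ -Real.exp (-(c * κ * s)) / c ^ 2)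
      (κ / c * Real.exp (-(c * κ * s))) s := by
    refine ((((hasDerivAt_id s).const_mul (c * κ)).fun_neg.exp.fun_neg).div_const _).congr_deriv ?_
    simp only [id_eq]
    field_simp
  have hgronwall := le_mul_exp_sub_of_hasDerivAt_le_mul ht
    (fun s hs ↦ h.hasDerivAt_modifiedEnergy (c := c) hκ hs.1) (fun s _ ↦ hprimitive s)
    (fun s hs ↦ deriv_modifiedEnergy_le hc hκ (ha s hs.1))
  have hexponent :
      -Real.exp (-(c * κ * t)) / c ^ 2 - -Real.exp (-(c * κ * 0)) / c ^ 2 ≤ 1 / c ^ 2 := by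
    have : 0 ≤ Real.exp (-(c * κ * t)) / c ^ 2 := by positivity
    simp only [mul_zero, neg_zero, Real.exp_zero, neg_div]
    linarith
  have hnonneg : 0 ≤ modifiedEnergy c κ u v 0 := by
    have := logisticWeight_pos (c := c) 0 hκ
    unfold modifiedEnergy
    positivity
  rw [mul_comm]
  exact hgronwall.trans (by gcongr)

theorem sq_mul_norm_sq_displacement_le (h : IsDampedOscillation_s2 κ a u v) (hc : 0 < c)
    (hκ : 0 ≤ κ) (ha : ∀ t, 0 ≤ t → c * κ ≤ a t) {t : ℝ} (ht : 0 ≤ t) :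
    κ ^ 2 * ‖u t‖ ^ 2 ≤ Real.exp (1 / c ^ 2) * (κ ^ 2 * ‖u 0‖ ^ 2 + ‖v 0‖ ^ 2) := by
  have hθ := logisticWeight_pos (c := c) t hκ
  have hinitial : κ * logisticWeight c κ 0 ≤ 1 := by
    rw [logisticWeight_zero, ← div_eq_mul_inv]
    exact div_le_one_of_le₀ (by linarith) (by linarith)
  calc κ ^ 2 * ‖u t‖ ^ 2 = κ * (κ * ‖u t‖ ^ 2) := by ring
    _ ≤ κ * modifiedEnergy c κ u v t := by
        gcongr
        exact le_add_of_nonneg_right (by positivity)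
    _ ≤ κ * (Real.exp (1 / c ^ 2) * modifiedEnergy c κ u v 0) := by
        gcongr
        exact h.modifiedEnergy_le hc hκ ha ht
    _ = Real.exp (1 / c ^ 2) *
          (κ ^ 2 * ‖u 0‖ ^ 2 + κ * logisticWeight c κ 0 * ‖v 0‖ ^ 2) := by
        rw [modifiedEnergy]
        ring
    _ ≤ Real.exp (1 / c ^ 2) * (κ ^ 2 * ‖u 0‖ ^ 2 + ‖v 0‖ ^ 2) := by
        gcongr
        exact mul_le_of_le_one_left (sq_nonneg _) hinitial

theorem norm_sq_velocity_le (h : IsDampedOscillation_s2 κ a u v) (hc : 0 < c)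
    (hκ : 0 ≤ κ) (ha : ∀ t, 0 ≤ t → c * κ ≤ a t) {t : ℝ} (ht : 0 ≤ t) :
    ‖v t‖ ^ 2 ≤
      Real.exp (1 / c ^ 2) * (1 + t) ^ 2 * (κ ^ 2 * ‖u 0‖ ^ 2 + ‖v 0‖ ^ 2) := by
  set A := Real.exp (1 / c ^ 2)
  set N := κ ^ 2 * ‖u 0‖ ^ 2 + ‖v 0‖ ^ 2
  have hA : 1 ≤ A := Real.one_le_exp (by positivity)
  have hforce (s : ℝ) (hs : s ∈ Set.Icc 0 t) : ‖-(κ • u s)‖ ≤ √(A * N) := by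
    refine Real.le_sqrt_of_sq_le ?_
    rw [norm_neg, norm_smul, mul_pow, Real.norm_eq_abs, sq_abs]
    exact h.sq_mul_norm_sq_displacement_le hc hκ ha hs.1
  have hinitial : ‖v 0‖ ≤ √(A * N) := by
    refine Real.le_sqrt_of_sq_le ?_
    calc ‖v 0‖ ^ 2 ≤ N := le_add_of_nonneg_left (by positivity)
      _ ≤ A * N := le_mul_of_one_le_left (by positivity) hA
  have hgrowth : ‖v t‖ ≤ √(A * N) * (1 + t) := by
    have := norm_le_add_mul_of_hasDerivAt_sub_smul ht
      (fun s hs ↦ h.hasDerivAt_velocity s hs.1)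
      (fun s hs ↦ (by positivity : 0 ≤ c * κ).trans (ha s hs.1)) hforce
    linarith
  calc ‖v t‖ ^ 2 ≤ (√(A * N) * (1 + t)) ^ 2 := by gcongr
    _ = A * (1 + t) ^ 2 * N := by
        rw [mul_pow, Real.sq_sqrt (by positivity)]
        ring

end IsDampedOscillation_s2
end DampedOscillation

section WeightedL2

variable {E F : Type*} [NormedAddCommGroup E] [MeasurableSpace E] [NormedAddCommGroup F]

/-- `f` is the Fourier transform of a function with finite homogeneous Sobolev norm
`‖|D|^s ·‖_{L²}`, expressed by integrability of `‖ξ‖^(2s) ‖f ξ‖²`. -/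
def MemWeightedL2 (μ : Measure E) (s : ℝ) (f : E → F) : Prop :=
  Integrable (fun ξ ↦ ‖ξ‖ ^ (2 * s) * ‖f ξ‖ ^ 2) μ

/-- The homogeneous Sobolev norm `‖|D|^s ·‖_{L²}` on the Fourier side. It has the junk value `0`
when `MemWeightedL2 μ s f` fails. -/
noncomputable def weightedL2Norm (μ : Measure E) (s : ℝ) (f : E → F) : ℝ :=
  √(∫ ξ, ‖ξ‖ ^ (2 * s) * ‖f ξ‖ ^ 2 ∂μ)

variable {μ : Measure E} {F₁ F₂ : Type*} [NormedAddCommGroup F₁] [NormedAddCommGroup F₂]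

lemma weightedL2Norm_nonneg (s : ℝ) (f : E → F) : 0 ≤ weightedL2Norm μ s f := Real.sqrt_nonneg _

lemma sqrt_add_le_add_sqrt {x y : ℝ} (hx : 0 ≤ x) (hy : 0 ≤ y) : √(x + y) ≤ √x + √y := by
  simpa only [Real.sqrt_eq_rpow] using
    Real.rpow_add_le_add_rpow hx hy one_half_pos.le one_half_lt_one.le

lemma memWeightedL2_and_weightedL2Norm_le [OpensMeasurableSpace E] {s s₁ s₂ K : ℝ} {f : E → F}
    {f₁ : E → F₁} {f₂ : E → F₂} (hf : AEStronglyMeasurable f μ) (hf₁ : MemWeightedL2 μ s₁ f₁)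
    (hf₂ : MemWeightedL2 μ s₂ f₂) (hK : 0 ≤ K)
    (hle : ∀ᵐ ξ ∂μ, ‖ξ‖ ^ (2 * s) * ‖f ξ‖ ^ 2 ≤
      K ^ 2 * (‖ξ‖ ^ (2 * s₁) * ‖f₁ ξ‖ ^ 2 + ‖ξ‖ ^ (2 * s₂) * ‖f₂ ξ‖ ^ 2)) :
    MemWeightedL2 μ s f ∧
      weightedL2Norm μ s f ≤ K * (weightedL2Norm μ s₁ f₁ + weightedL2Norm μ s₂ f₂) := by
  have hbound := (hf₁.add hf₂).const_mul (K ^ 2)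
  have hmem : MemWeightedL2 μ s f := by
    refine hbound.mono' ?_ (hle.mono fun ξ hξ ↦ ?_)
    · exact (measurable_norm.pow_const _).aestronglyMeasurable.mul (hf.norm.pow 2)
    · rwa [Real.norm_of_nonneg (by positivity)]
  refine ⟨hmem, ?_⟩
  have hintegral : ∫ ξ, ‖ξ‖ ^ (2 * s) * ‖f ξ‖ ^ 2 ∂μ ≤
      K ^ 2 * (∫ ξ, ‖ξ‖ ^ (2 * s₁) * ‖f₁ ξ‖ ^ 2 ∂μ + ∫ ξ, ‖ξ‖ ^ (2 * s₂) * ‖f₂ ξ‖ ^ 2 ∂μ) := by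
    rw [← integral_add hf₁ hf₂, ← integral_const_mul]
    exact integral_mono_ae hmem hbound hle
  calc weightedL2Norm μ s f ≤ √(K ^ 2 * (_ + _)) := Real.sqrt_le_sqrt hintegral
    _ = K * √(_ + _) := by rw [Real.sqrt_mul (sq_nonneg K), Real.sqrt_sq hK]
    _ ≤ K * (weightedL2Norm μ s₁ f₁ + weightedL2Norm μ s₂ f₂) := by
        gcongr
        exact sqrt_add_le_add_sqrt (by positivity) (by positivity)

lemma rpow_two_mul_eq_mul_sq_sq {r : ℝ} (hr : 0 < r) (σ : ℝ) :
    r ^ (2 * σ) = r ^ (2 * (σ - 2)) * (r ^ 2) ^ 2 := by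
  rw [← pow_mul, ← Real.rpow_natCast r, ← Real.rpow_add hr]
  congr 1
  push_cast
  ring

end WeightedL2

section Measurability

variable {E F : Type*} [MeasurableSpace E] {μ : Measure E} [NormedAddCommGroup F]
  [NormedSpace ℝ F]

lemma aestronglyMeasurable_of_hasDerivAt {u : ℝ → E → F} {v : E → F} {t : ℝ}
    (hu : ∀ s, t ≤ s → AEStronglyMeasurable (u s) μ)
    (hv : ∀ᵐ ξ ∂μ, HasDerivAt (fun s ↦ u s ξ) (v ξ) t) : AEStronglyMeasurable v μ := by
  obtain ⟨h, -, hpos, hlim⟩ := exists_seq_strictAnti_tendsto (0 : ℝ)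
  have hlim' : Tendsto h atTop (𝓝[>] 0) :=
    tendsto_nhdsWithin_iff.2 ⟨hlim, Eventually.of_forall hpos⟩
  refine aestronglyMeasurable_of_tendsto_ae atTop
    (f := fun k ξ ↦ (h k)⁻¹ • (u (t + h k) ξ - u t ξ)) (fun k ↦ ?_) ?_
  · exact ((hu _ (le_add_of_nonneg_right (hpos k).le)).sub (hu t le_rfl)).const_smul _
  · exact hv.mono fun ξ hξ ↦ hξ.tendsto_slope_zero_right.comp hlim'

end Measurability

lemma exists_pos_forall_mul_one_add_le {g : ℝ → ℝ} (hmono : MonotoneOn g (Set.Ici 0))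
    (hpos : ∀ t, 0 ≤ t → 0 < g t) (hint : IntegrableOn (fun t ↦ (g t)⁻¹) (Set.Ici 0)) :
    ∃ c, 0 < c ∧ ∀ t, 0 ≤ t → c * (1 + t) ≤ g t := by
  have hinv_nonneg (t : ℝ) (ht : t ∈ Set.Ici 0) : 0 ≤ (g t)⁻¹ := (inv_pos.2 (hpos t ht)).le
  have hg0 : 0 < g 0 := hpos 0 le_rfl
  set S := ∫ s in Set.Ici (0 : ℝ), (g s)⁻¹
  have hS : 0 ≤ S := setIntegral_nonneg measurableSet_Ici hinv_nonneg
  have htime (t : ℝ) (ht : 0 ≤ t) : t * (g t)⁻¹ ≤ S :=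
    calc t * (g t)⁻¹ = ∫ _ in Set.Icc 0 t, (g t)⁻¹ := by simp [ht]
      _ ≤ ∫ s in Set.Icc 0 t, (g s)⁻¹ :=
          setIntegral_mono_on (integrableOn_const (by simp))
            (hint.mono_set Set.Icc_subset_Ici_self) measurableSet_Icc
            fun s hs ↦ inv_anti₀ (hpos s hs.1) (hmono hs.1 ht hs.2)
      _ ≤ S := setIntegral_mono_set hint
          (ae_restrict_of_forall_mem measurableSet_Ici hinv_nonneg)
          Set.Icc_subset_Ici_self.eventuallyLE
  refine ⟨((g 0)⁻¹ + S)⁻¹, by positivity, fun t ht ↦ ?_⟩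
  have hgt := hpos t ht
  have hone : 1 ≤ (g 0)⁻¹ * g t := by
    rw [inv_mul_eq_div, one_le_div hg0]
    exact hmono Set.self_mem_Ici ht ht
  have ht_le : t ≤ S * g t := by
    rw [← div_le_iff₀ hgt, div_eq_mul_inv]
    exact htime t ht
  rw [inv_mul_le_iff₀ (by positivity)]
  linarith

section Superposition

variable {E F : Type*} [NormedAddCommGroup E] [MeasurableSpace E] [OpensMeasurableSpace E]
  {μ : Measure E} [NullSingletonClass μ] [NormedAddCommGroup F] [InnerProductSpace ℝ F]
  {a : E → ℝ → ℝ} {u v : ℝ → E → F} {c σ t : ℝ}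

theorem memWeightedL2_and_weightedL2Norm_displacement_le (hc : 0 < c)
    (ha : ∀ ξ s, 0 ≤ s → c * ‖ξ‖ ^ 2 ≤ a ξ s)
    (hosc : ∀ᵐ ξ ∂μ, IsDampedOscillation_s2 (‖ξ‖ ^ 2) (a ξ) (fun s ↦ u s ξ) (fun s ↦ v s ξ))
    (hu₀ : MemWeightedL2 μ σ (u 0)) (hv₀ : MemWeightedL2 μ (σ - 2) (v 0)) (ht : 0 ≤ t)
    (hu : AEStronglyMeasurable (u t) μ) :
    MemWeightedL2 μ σ (u t) ∧ weightedL2Norm μ σ (u t) ≤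
      √(Real.exp (1 / c ^ 2)) * (weightedL2Norm μ σ (u 0) + weightedL2Norm μ (σ - 2) (v 0)) := by
  refine memWeightedL2_and_weightedL2Norm_le hu hu₀ hv₀ (by positivity) ?_
  filter_upwards [hosc, compl_mem_ae_iff.2 (measure_singleton (0 : E))] with ξ hξ hξ_ne
  rw [rpow_two_mul_eq_mul_sq_sq (norm_pos_iff.2 hξ_ne) σ, Real.sq_sqrt (Real.exp_nonneg _)]
  have hpointwise := mul_le_mul_of_nonneg_left
    (hξ.sq_mul_norm_sq_displacement_le hc (by positivity) (ha ξ) ht)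
    (by positivity : 0 ≤ ‖ξ‖ ^ (2 * (σ - 2)))
  linarith

theorem memWeightedL2_and_weightedL2Norm_velocity_le (hc : 0 < c)
    (ha : ∀ ξ s, 0 ≤ s → c * ‖ξ‖ ^ 2 ≤ a ξ s)
    (hosc : ∀ᵐ ξ ∂μ, IsDampedOscillation_s2 (‖ξ‖ ^ 2) (a ξ) (fun s ↦ u s ξ) (fun s ↦ v s ξ))
    (hu₀ : MemWeightedL2 μ σ (u 0)) (hv₀ : MemWeightedL2 μ (σ - 2) (v 0)) (ht : 0 ≤ t)
    (hu : ∀ s, t ≤ s → AEStronglyMeasurable (u s) μ) :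
    MemWeightedL2 μ (σ - 2) (v t) ∧ weightedL2Norm μ (σ - 2) (v t) ≤
      √(Real.exp (1 / c ^ 2)) * (1 + t) *
        (weightedL2Norm μ σ (u 0) + weightedL2Norm μ (σ - 2) (v 0)) := by
  have hv : AEStronglyMeasurable (v t) μ := aestronglyMeasurable_of_hasDerivAt hu
    (hosc.mono fun ξ hξ ↦ hξ.hasDerivAt_displacement t ht)
  refine memWeightedL2_and_weightedL2Norm_le hv hu₀ hv₀ (by positivity) ?_
  filter_upwards [hosc, compl_mem_ae_iff.2 (measure_singleton (0 : E))] with ξ hξ hξ_ne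
  rw [rpow_two_mul_eq_mul_sq_sq (norm_pos_iff.2 hξ_ne) σ, mul_pow,
    Real.sq_sqrt (Real.exp_nonneg _)]
  have hpointwise := mul_le_mul_of_nonneg_left
    (hξ.norm_sq_velocity_le hc (by positivity) (ha ξ) ht)
    (by positivity : 0 ≤ ‖ξ‖ ^ (2 * (σ - 2)))
  linarith

end Superposition

theorem noneffective_increasing_viscoelastic_decay_general
    {E F : Type*} [NormedAddCommGroup E] [MeasurableSpace E] [OpensMeasurableSpace E]
    {μ : Measure E} [NullSingletonClass μ] [NormedAddCommGroup F] [InnerProductSpace ℝ F]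
    {b g : ℝ → ℝ} {c : ℝ} (hc : 0 < c) (hb : ∀ t, 0 ≤ t → 0 ≤ b t)
    (hg : ∀ t, 0 ≤ t → c * (1 + t) ≤ g t) :
    ∃ C, 0 < C ∧ ∀ (σ : ℝ) (u v : ℝ → E → F),
      (∀ t, 0 ≤ t → AEStronglyMeasurable (u t) μ) →
      (∀ᵐ ξ ∂μ, IsDampedOscillation_s2 (‖ξ‖ ^ 2) (fun t ↦ b t + g t * ‖ξ‖ ^ 2)
        (fun t ↦ u t ξ) (fun t ↦ v t ξ)) →
      MemWeightedL2 μ σ (u 0) → MemWeightedL2 μ (σ - 2) (v 0) → ∀ t, 0 ≤ t →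
        (MemWeightedL2 μ σ (u t) ∧ weightedL2Norm μ σ (u t) ≤
          C * (weightedL2Norm μ σ (u 0) + weightedL2Norm μ (σ - 2) (v 0))) ∧
        (MemWeightedL2 μ (σ - 2) (v t) ∧ weightedL2Norm μ (σ - 2) (v t) ≤
          C * g t * (weightedL2Norm μ σ (u 0) + weightedL2Norm μ (σ - 2) (v 0))) := by
  refine ⟨√(Real.exp (1 / c ^ 2)) * (1 + c⁻¹), by positivity,
    fun σ u v hu hosc hu₀ hv₀ t ht ↦ ?_⟩
  have hdamping (ξ : E) (s : ℝ) (hs : 0 ≤ s) : c * ‖ξ‖ ^ 2 ≤ b s + g s * ‖ξ‖ ^ 2 := by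
    have hcg : c ≤ g s := (le_mul_of_one_le_right hc.le (by linarith)).trans (hg s hs)
    exact (by gcongr : c * ‖ξ‖ ^ 2 ≤ g s * ‖ξ‖ ^ 2).trans (le_add_of_nonneg_left (hb s hs))
  have hone_le : 1 ≤ 1 + c⁻¹ := le_add_of_nonneg_right (by positivity)
  have hone_add_le : 1 + t ≤ (1 + c⁻¹) * g t := by
    have hgt : 0 ≤ g t := le_trans (by positivity) (hg t ht)
    have : 1 + t ≤ c⁻¹ * g t := (le_inv_mul_iff₀ hc).2 (hg t ht)
    linarith
  have hdata : 0 ≤ weightedL2Norm μ σ (u 0) + weightedL2Norm μ (σ - 2) (v 0) :=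
    add_nonneg (weightedL2Norm_nonneg _ _) (weightedL2Norm_nonneg _ _)
  obtain ⟨hu_mem, hu_le⟩ := memWeightedL2_and_weightedL2Norm_displacement_le hc hdamping hosc
    hu₀ hv₀ ht (hu t ht)
  obtain ⟨hv_mem, hv_le⟩ := memWeightedL2_and_weightedL2Norm_velocity_le hc hdamping hosc
    hu₀ hv₀ ht fun s hs ↦ hu s (ht.trans hs)
  refine ⟨⟨hu_mem, hu_le.trans ?_⟩, hv_mem, hv_le.trans ?_⟩
  · gcongr
    exact le_mul_of_one_le_right (Real.sqrt_nonneg _) hone_le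
  · rw [mul_assoc √_ (1 + c⁻¹)]
    gcongr

/-- Theorem 3.1 of the paper: non-effective friction together with an increasing
viscoelastic coefficient `g = g(t)`. -/
theorem noneffective_increasing_viscoelastic_decay
    (n : ℕ) (hn : 1 ≤ n)
    (b g G : ℝ → ℝ)
    (hg_smooth : ContDiff ℝ 2 g)
    (hg_pos : ∀ t : ℝ, 0 ≤ t → 0 < g t)
    (hg_deriv_pos : ∀ t : ℝ, 0 ≤ t → 0 < deriv g t)
    (hg_int : IntegrableOn (fun t => (g t)⁻¹) (Set.Ici (0 : ℝ)))
    (hG : ∀ t : ℝ, G t = (1 / 2) * ∫ τ in (0 : ℝ)..t, g τ)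
    (C₁ C₂ : ℝ) (hC₁ : 0 < C₁) (hC₂ : 0 < C₂)
    (hg1 : ∀ t : ℝ, 0 < t → |deriv g t| ≤ C₁ * (g t) ^ 2 / G t)
    (hg2 : ∀ t : ℝ, 0 < t → |deriv (deriv g) t| ≤ C₂ * (g t) ^ 3 / (G t) ^ 2)
    (hb_smooth : ContDiff ℝ 1 b)
    (hb_pos : ∀ t : ℝ, 0 ≤ t → 0 < b t)
    (hb_deriv_neg : ∀ t : ℝ, 0 ≤ t → deriv b t < 0)
    (C₀ : ℝ) (hC₀ : 0 < C₀)
    (hb2 : ∀ t : ℝ, 0 ≤ t → (b t) ^ 2 ≤ C₀ * (-(deriv b t)))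
    (hb_limsup : Filter.limsup (fun t => t * b t) atTop < 1)
    (Ctil : ℝ) (hCtil : 0 < Ctil)
    (hbG : ∀ t : ℝ, 0 < t → b t ≤ Ctil * g t / G t) :
    ∀ σ : ℝ, 2 ≤ σ →
      ∃ C : ℝ, 0 < C ∧
        ∀ (uh : ℝ → EuclideanSpace ℝ (Fin n) → ℂ) (u₀ u₁ : EuclideanSpace ℝ (Fin n) → ℂ),
          Measurable (fun p : ℝ × EuclideanSpace ℝ (Fin n) => uh p.1 p.2) →
          (∀ ξ : EuclideanSpace ℝ (Fin n), ContDiff ℝ 2 (fun s => uh s ξ)) →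
          (∀ (ξ : EuclideanSpace ℝ (Fin n)) (t : ℝ), 0 ≤ t →
            deriv (deriv (fun s => uh s ξ)) t + ((‖ξ‖ ^ 2 : ℝ) : ℂ) * uh t ξ +
              ((b t + g t * ‖ξ‖ ^ 2 : ℝ) : ℂ) * deriv (fun s => uh s ξ) t = 0) →
          (∀ ξ : EuclideanSpace ℝ (Fin n), uh 0 ξ = u₀ ξ) →
          (∀ ξ : EuclideanSpace ℝ (Fin n), deriv (fun s => uh s ξ) 0 = u₁ ξ) →
          ∀ t : ℝ, 0 ≤ t →
            Integrable (fun ξ : EuclideanSpace ℝ (Fin n) => ‖ξ‖ ^ (2 * σ) * ‖u₀ ξ‖ ^ 2) →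
            Integrable (fun ξ : EuclideanSpace ℝ (Fin n) => ‖ξ‖ ^ (2 * (σ - 2)) * ‖u₁ ξ‖ ^ 2) →
            Real.sqrt (∫ ξ : EuclideanSpace ℝ (Fin n), ‖ξ‖ ^ (2 * σ) * ‖uh t ξ‖ ^ 2) ≤
                C * (Real.sqrt (∫ ξ : EuclideanSpace ℝ (Fin n), ‖ξ‖ ^ (2 * σ) * ‖u₀ ξ‖ ^ 2) +
                  Real.sqrt (∫ ξ : EuclideanSpace ℝ (Fin n), ‖ξ‖ ^ (2 * (σ - 2)) * ‖u₁ ξ‖ ^ 2)) ∧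
              Real.sqrt (∫ ξ : EuclideanSpace ℝ (Fin n), ‖ξ‖ ^ (2 * (σ - 2)) * ‖deriv (fun s => uh s ξ) t‖ ^ 2) ≤
                C * g t * (Real.sqrt (∫ ξ : EuclideanSpace ℝ (Fin n), ‖ξ‖ ^ (2 * σ) * ‖u₀ ξ‖ ^ 2) +
                  Real.sqrt (∫ ξ : EuclideanSpace ℝ (Fin n), ‖ξ‖ ^ (2 * (σ - 2)) * ‖u₁ ξ‖ ^ 2)) := by
  have hg_mono : MonotoneOn g (Set.Ici 0) :=
    monotoneOn_of_deriv_nonneg (convex_Ici 0) hg_smooth.continuous.continuousOn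
      (hg_smooth.differentiable two_ne_zero).differentiableOn
      fun t ht ↦ (hg_deriv_pos t (interior_subset ht)).le
  obtain ⟨c, hc, hcg⟩ := exists_pos_forall_mul_one_add_le hg_mono hg_pos hg_int
  have : Nonempty (Fin n) := ⟨⟨0, hn⟩⟩
  obtain ⟨C, hC, hdecay⟩ := noneffective_increasing_viscoelastic_decay_general
    (E := EuclideanSpace ℝ (Fin n)) (F := ℂ) (μ := volume) hc (fun t ht ↦ (hb_pos t ht).le) hcg
  refine fun σ _ ↦ ⟨C, hC, fun uh u₀ u₁ hmeas hsmooth hode hu₀ hu₁ t ht hint₀ hint₁ ↦ ?_⟩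
  obtain rfl : uh 0 = u₀ := funext hu₀
  obtain rfl : (fun ξ ↦ deriv (fun s ↦ uh s ξ) 0) = u₁ := funext hu₁
  obtain ⟨⟨-, hdisplacement⟩, -, hvelocity⟩ :=
    hdecay σ uh (fun t ξ ↦ deriv (fun s ↦ uh s ξ) t)
      (fun s _ ↦ hmeas.of_uncurry_left.aestronglyMeasurable)
      (Eventually.of_forall fun ξ ↦ isDampedOscillation_of_contDiff (hsmooth ξ) (hode ξ))
      hint₀ hint₁ t ht
  exact ⟨hdisplacement, hvelocity⟩
end
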